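/- Let p ∈ (1,2), δ ∈ (0, 1/4], and let u₁, u₂, v₁, v₂ ∈ ℝ with w_i := u_i - v_i. Writing D := (φ(u₁-u₂) - φ(v₁-v₂))(w₁-w₂) with φ(t) = |t|^{p-2}t (φ(0)=0), one has |w₁-w₂|^p ≤ 16 δ |u₁-u₂|^p + c(p) δ^{-(2-p)/p} D, for a constant c(p) depending only on p. -/

import Mathlib

lemma aux_anti (p : ℝ) (hp2 : p < 2) (x S : ℝ) (hx : 0 ≤ x) (hS : x ≤ S) :
    S ^ (p - 2) * x ≤ x ^ (p - 2) * x := by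
  rcases hx.eq_or_lt with h | h
  · simp [← h]
  · exact mul_le_mul_of_nonneg_right (Real.rpow_le_rpow_of_nonpos h hS (by linarith)) hx

lemma aux_same' (p : ℝ) (hp1 : 1 < p) (hp2 : p < 2) (x y : ℝ) (hx : 0 < x) (hy : 0 ≤ y)
    (hxy : y ≤ x) :
    (p - 1) * (x + y) ^ (p - 2) * (x - y) ^ 2
      ≤ (x ^ (p - 2) * x - y ^ (p - 2) * y) * (x - y) := by
  have e : ∀ t : ℝ, 0 ≤ t → t ^ (p - 2) * t = t ^ (p - 1) := by
    intro t ht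
    rcases ht.eq_or_lt with h | h
    · rw [← h, Real.zero_rpow (x := p - 1) (by linarith)]; simp
    · rw [← Real.rpow_add_one h.ne']; congr 1; ring
  have hb := rpow_one_add_le_one_add_mul_self (s := y / x - 1) (p := p - 1)
    (by have : 0 ≤ y / x := by positivity
        linarith) (by linarith) (by linarith)
  have h1 : (1 + (y / x - 1)) = y / x := by ring
  rw [h1, Real.div_rpow hy hx.le, ← e x hx.le, ← e y hy] at hb
  have hX : 0 < x ^ (p - 2) := Real.rpow_pos_of_pos hx _
  rw [div_le_iff₀ (by positivity)] at hb
  have h2 : (1 + (p - 1) * (y / x - 1)) * (x ^ (p - 2) * x)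
      = x ^ (p - 2) * x - (p - 1) * x ^ (p - 2) * (x - y) := by
    field_simp; ring
  rw [h2] at hb
  have h3 : (x + y) ^ (p - 2) ≤ x ^ (p - 2) :=
    Real.rpow_le_rpow_of_nonpos hx (by linarith) (by linarith)
  have h4 : (p - 1) * (x + y) ^ (p - 2) * (x - y) ^ 2 ≤ (p - 1) * x ^ (p - 2) * (x - y) ^ 2 := by
    have : 0 ≤ p - 1 := by linarith
    gcongr
  have h5 : (p - 1) * x ^ (p - 2) * (x - y) * (x - y)
      ≤ (x ^ (p - 2) * x - y ^ (p - 2) * y) * (x - y) :=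
    mul_le_mul_of_nonneg_right (by linarith) (by linarith)
  nlinarith [h4, h5]

lemma aux_same (p : ℝ) (hp1 : 1 < p) (hp2 : p < 2) (x y : ℝ) (hx : 0 ≤ x) (hy : 0 ≤ y) :
    (p - 1) * (x + y) ^ (p - 2) * (x - y) ^ 2
      ≤ (x ^ (p - 2) * x - y ^ (p - 2) * y) * (x - y) := by
  rcases lt_trichotomy x y with h | h | h
  · have := aux_same' p hp1 hp2 y x (by linarith) hx h.le
    rw [add_comm y x] at this
    linarith
  · simp [h]
  · exact aux_same' p hp1 hp2 x y (by linarith) hy h.le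

lemma aux_opp (p : ℝ) (hp1 : 1 < p) (hp2 : p < 2) (x y : ℝ) (hx : 0 ≤ x) (hy : 0 ≤ y) :
    (p - 1) * (x + y) ^ (p - 2) * (x + y) ^ 2
      ≤ (x ^ (p - 2) * x + y ^ (p - 2) * y) * (x + y) := by
  have h1 := aux_anti p hp2 x (x + y) hx (by linarith)
  have h2 := aux_anti p hp2 y (x + y) hy (by linarith)
  have h3 : 0 ≤ (x + y) ^ (p - 2) * (x + y) ^ 2 := by positivity
  have h4 := mul_le_mul_of_nonneg_right (add_le_add h1 h2) (by linarith : 0 ≤ x + y)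
  nlinarith

lemma aux_coer (p : ℝ) (hp1 : 1 < p) (hp2 : p < 2) (a b : ℝ) :
    (p - 1) * (|a| + |b|) ^ (p - 2) * (a - b) ^ 2
      ≤ (|a| ^ (p - 2) * a - |b| ^ (p - 2) * b) * (a - b) := by
  have hs := aux_same p hp1 hp2 |a| |b| (abs_nonneg a) (abs_nonneg b)
  have ho := aux_opp p hp1 hp2 |a| |b| (abs_nonneg a) (abs_nonneg b)
  generalize hS : (|a| + |b|) ^ (p - 2) = S at *
  generalize hA : |a| ^ (p - 2) = A at *
  generalize hB : |b| ^ (p - 2) = B at *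
  rcases abs_cases a with ⟨h, _⟩ | ⟨h, _⟩ <;> rcases abs_cases b with ⟨h', _⟩ | ⟨h', _⟩ <;>
    rw [h, h'] at hs ho <;> linarith

lemma aux_main (p : ℝ) (hp1 : 1 < p) (hp2 : p < 2) (δ : ℝ) (hδ : 0 < δ) (hδ' : δ ≤ 1 / 4)
    (a b : ℝ) :
    |a - b| ^ p ≤ 16 * δ * |a| ^ p + 2 / (p - 1) * δ ^ (-(2 - p) / p) *
      ((|a| ^ (p - 2) * a - |b| ^ (p - 2) * b) * (a - b)) := by
  have hc := aux_coer p hp1 hp2 a b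
  set D := (|a| ^ (p - 2) * a - |b| ^ (p - 2) * b) * (a - b) with hD
  set S := |a| + |b| with hSdef
  set L := δ ^ (-(2 - p) / p) with hL
  have hp0 : 0 < p := by linarith
  have hLpos : 0 < L := Real.rpow_pos_of_pos hδ _
  have hS0 : 0 ≤ S := by positivity
  have hw0 : 0 ≤ |a - b| := abs_nonneg _
  have hX : 0 ≤ S ^ (p - 2) * (a - b) ^ 2 := by positivity
  have hXD : S ^ (p - 2) * (a - b) ^ 2 ≤ D / (p - 1) := by
    rw [le_div_iff₀ (by linarith)]; linarith
  -- Young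
  have hY : |a - b| ^ p ≤ L * (S ^ (p - 2) * (a - b) ^ 2) + 1 / 2 * (δ * S ^ p) := by
    rcases hS0.eq_or_lt with h | h
    · have ha : a = 0 := by
        have := abs_nonneg a; have := abs_nonneg b
        exact abs_eq_zero.1 (by linarith)
      have hb : b = 0 := by
        have := abs_nonneg a; have := abs_nonneg b
        exact abs_eq_zero.1 (by linarith)
      have : |a - b| ^ p = 0 := by
        rw [ha, hb]; simp [Real.zero_rpow hp0.ne']
      rw [this]; positivity
    · have hg := Real.geom_mean_le_arith_mean2_weighted (w₁ := p / 2) (w₂ := (2 - p) / 2)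
        (p₁ := L * (S ^ (p - 2) * (a - b) ^ 2)) (p₂ := δ * S ^ p)
        (by linarith) (by linarith) (by positivity) (by positivity) (by ring)
      have e1 : (L * (S ^ (p - 2) * (a - b) ^ 2)) ^ (p / 2) * (δ * S ^ p) ^ ((2 - p) / 2)
          = |a - b| ^ p := by
        rw [Real.mul_rpow hLpos.le hX, Real.mul_rpow (by positivity) (by positivity),
          Real.mul_rpow hδ.le (by positivity), hL, ← Real.rpow_mul hδ.le, ← Real.rpow_mul hS0,
          ← Real.rpow_mul hS0, ← sq_abs (a - b), ← Real.rpow_natCast |a - b| 2,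
          ← Real.rpow_mul hw0]
        have e2 : -(2 - p) / p * (p / 2) = -((2 - p) / 2) := by field_simp
        have e3 : (p - 2) * (p / 2) = -(p * ((2 - p) / 2)) := by ring
        have e4 : ((2 : ℕ) : ℝ) * (p / 2) = p := by push_cast; ring
        rw [e2, e3, e4, Real.rpow_neg hδ.le, Real.rpow_neg hS0]
        have := (Real.rpow_pos_of_pos hδ ((2 - p) / 2)).ne'
        have := (Real.rpow_pos_of_pos h (p * ((2 - p) / 2))).ne'
        field_simp
      rw [e1] at hg
      have i1 : p / 2 * (L * (S ^ (p - 2) * (a - b) ^ 2))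
          ≤ 1 * (L * (S ^ (p - 2) * (a - b) ^ 2)) :=
        mul_le_mul_of_nonneg_right (by linarith) (by positivity)
      have i2 : (2 - p) / 2 * (δ * S ^ p) ≤ 1 / 2 * (δ * S ^ p) :=
        mul_le_mul_of_nonneg_right (by linarith) (by positivity)
      linarith
  have hSp : S ^ p ≤ 8 * |a| ^ p + 2 * |a - b| ^ p := by
    have s1 : S ≤ 2 * |a| + |a - b| := by
      have : |b| ≤ |a| + |a - b| := by
        have := abs_sub a (a - b)
        rwa [sub_sub_cancel] at this
      linarith
    have s2 : S ^ p ≤ (2 * |a| + |a - b|) ^ p := Real.rpow_le_rpow hS0 s1 hp0.le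
    have s3 : (2 * |a| + |a - b|) ^ p ≤ 2 ^ (p - 1) * ((2 * |a|) ^ p + |a - b| ^ p) := by
      have := NNReal.rpow_add_le_mul_rpow_add_rpow ⟨2 * |a|, by positivity⟩ ⟨|a - b|, hw0⟩ hp1.le
      exact_mod_cast this
    rw [Real.mul_rpow (by norm_num) (abs_nonneg a)] at s3
    have t1 : (2 : ℝ) ^ (p - 1) ≤ 2 := by
      simpa using Real.rpow_le_rpow_of_exponent_le (x := 2) (by norm_num)
        (by linarith : p - 1 ≤ 1)
    have t2 : (2 : ℝ) ^ p ≤ 4 := by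
      have := Real.rpow_le_rpow_of_exponent_le (x := 2) (by norm_num) hp2.le
      norm_num at this ⊢; exact this
    have ha : 0 ≤ |a| ^ p := by positivity
    have hw : 0 ≤ |a - b| ^ p := by positivity
    calc S ^ p ≤ _ := s2
      _ ≤ _ := s3
      _ ≤ 2 * (4 * |a| ^ p + |a - b| ^ p) := by gcongr
      _ = _ := by ring
  have ha : 0 ≤ |a| ^ p := by positivity
  have hw : 0 ≤ |a - b| ^ p := by positivity
  have k1 := mul_le_mul_of_nonneg_left hSp hδ.le
  have k2 := mul_le_mul_of_nonneg_left hXD hLpos.le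
  have k3 := mul_le_mul_of_nonneg_right hδ' hw
  have k4 : 0 ≤ δ * |a| ^ p := by positivity
  have k5 : 0 ≤ L * (D / (p - 1)) := le_trans (by positivity) k2
  have k6 : 2 / (p - 1) * L * D = 2 * (L * (D / (p - 1))) := by ring
  rw [k6]
  linarith

/-- Pointwise inequality in the subquadratic case p ∈ (1,2): for δ ∈ (0,1/4], writing
w_i = u_i - v_i and D = (φ(u₁-u₂) - φ(v₁-v₂))(w₁-w₂) with φ(t) = |t|^{p-2}t,
one has |w₁-w₂|^p ≤ 16δ|u₁-u₂|^p + c(p) δ^{-(2-p)/p} D. -/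
theorem stmt16 (p : ℝ) (hp1 : 1 < p) (hp2 : p < 2) :
    ∃ c : ℝ, 0 < c ∧ ∀ δ : ℝ, 0 < δ → δ ≤ 1 / 4 → ∀ u₁ u₂ v₁ v₂ : ℝ,
      |(u₁ - v₁) - (u₂ - v₂)| ^ p ≤
        16 * δ * |u₁ - u₂| ^ p +
          c * δ ^ (-(2 - p) / p) *
            ((|u₁ - u₂| ^ (p - 2) * (u₁ - u₂) - |v₁ - v₂| ^ (p - 2) * (v₁ - v₂)) *
              ((u₁ - v₁) - (u₂ - v₂))) := by

  refine ⟨2 / (p - 1), div_pos two_pos (by linarith), ?_⟩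
  intro δ hδ hδ' u₁ u₂ v₁ v₂
  have h := aux_main p hp1 hp2 δ hδ hδ' (u₁ - u₂) (v₁ - v₂)
  have e : (u₁ - u₂) - (v₁ - v₂) = (u₁ - v₁) - (u₂ - v₂) := by ring
  rw [e] at h
  exact h
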